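/- A continuous function f : (0,∞) → (0,∞) is operator monotone decreasing if and only if f(A ∇ B) ≤ f(A) # f(B) for every n ∈ ℕ and all n×n positive definite complex matrices A, B. -/

import Mathlib

open Matrix
open scoped ComplexOrder

/-- The Loewner order on matrices: `A ≤ B` iff `B - A` is positive semidefinite. -/
def MLE {n : ℕ} (A B : Matrix (Fin n) (Fin n) ℂ) : Prop := (B - A).PosSemidef

/-- The `t`-weighted harmonic mean `A !_t B = ((1-t)A⁻¹ + tB⁻¹)⁻¹`. -/
noncomputable def wharm {n : ℕ} (t : ℝ) (A B : Matrix (Fin n) (Fin n) ℂ) :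
    Matrix (Fin n) (Fin n) ℂ := ((1 - t) • A⁻¹ + t • B⁻¹)⁻¹

/-- The `t`-weighted arithmetic mean `A ∇_t B = (1-t)A + tB`. -/
noncomputable def warith {n : ℕ} (t : ℝ) (A B : Matrix (Fin n) (Fin n) ℂ) :
    Matrix (Fin n) (Fin n) ℂ := (1 - t) • A + t • B

/-- Real powers of a matrix, via the continuous functional calculus. -/
noncomputable def mpow {n : ℕ} (A : Matrix (Fin n) (Fin n) ℂ) (r : ℝ) :
    Matrix (Fin n) (Fin n) ℂ := cfc (fun x : ℝ => x ^ r) A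

/-- The `t`-weighted geometric mean `A #_t B = A^{1/2} (A^{-1/2} B A^{-1/2})^t A^{1/2}`. -/
noncomputable def wgeom {n : ℕ} (t : ℝ) (A B : Matrix (Fin n) (Fin n) ℂ) :
    Matrix (Fin n) (Fin n) ℂ :=
  mpow A (1/2) * mpow (mpow A (-(1/2)) * B * mpow A (-(1/2))) t * mpow A (1/2)

/-- `f` is operator monotone (increasing): order preserving on positive definite
matrices of every size, via the continuous functional calculus. -/
def OperatorMonotone (f : ℝ → ℝ) : Prop :=
  ∀ (n : ℕ) (A B : Matrix (Fin n) (Fin n) ℂ), A.PosDef → B.PosDef →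
    MLE A B → MLE (cfc f A) (cfc f B)

/-- `f` is operator monotone decreasing: order reversing on positive definite
matrices of every size, via the continuous functional calculus. -/
def OperatorAntitone (f : ℝ → ℝ) : Prop :=
  ∀ (n : ℕ) (A B : Matrix (Fin n) (Fin n) ℂ), A.PosDef → B.PosDef →
    MLE A B → MLE (cfc f B) (cfc f A)

/-!
Forward direction. Let `V` be the isometry `x ↦ (x, x) / √2` and `D = A ⊕ B`, so `V* D V = A ∇ B`.
For `c > 1` the pinching inequality bounds `D` by `V (c V* D V) V* + λ (1 - V V*)` with `λ` large,
and applying the decreasing `f > 0` and letting `c → 1` gives `V f(V* D V) V* ≤ f(D)`. Compressing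
with inverses turns this into `f(A ∇ B) ≤ (f(A)⁻¹ ∇ f(B)⁻¹)⁻¹`, a harmonic mean, which is below the
geometric mean.

Backward direction. By Cauchy–Schwarz, `⟨(P # Q) v, v⟩² ≤ ⟨P v, v⟩ ⟨Q v, v⟩`, so
`k ↦ ⟨f(A + k (B - A)) v, v⟩` is a log-convex sequence. If it grows at most linearly it cannot
increase, whence `f(B) ≤ f(A)`. The linear growth comes from `f` itself growing at most linearly:
the hypothesis for suitable `2 × 2` matrices bounds `f(q)²` in terms of `f(q + δ)`, so a too large
value of `f` would force `f` to blow up on a compact interval.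
-/

section FunctionalCalculus

open scoped MatrixOrder

variable {𝕜 m k : Type*} [RCLike 𝕜] [Fintype m] [DecidableEq m] [Fintype k] [DecidableEq k]

theorem continuousOn_spectrum (f : ℝ → ℝ) (A : Matrix m m 𝕜) : ContinuousOn f (spectrum ℝ A) :=
  A.finite_real_spectrum.continuousOn f

theorem cfc_matrix_mul (f g : ℝ → ℝ) (A : Matrix m m 𝕜) :
    cfc f A * cfc g A = cfc (fun x => f x * g x) A :=
  (cfc_mul f g A (continuousOn_spectrum f A) (continuousOn_spectrum g A)).symm

theorem pos_of_mem_spectrum {A : Matrix m m 𝕜} (hA : A.PosDef) {x : ℝ} (hx : x ∈ spectrum ℝ A) :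
    0 < x := by
  rw [hA.1.spectrum_real_eq_range_eigenvalues] at hx
  obtain ⟨i, rfl⟩ := hx
  exact hA.eigenvalues_pos i

theorem posDef_cfc {f : ℝ → ℝ} (hf : ∀ x, 0 < x → 0 < f x) {A : Matrix m m 𝕜} (hA : A.PosDef) :
    (cfc f A).PosDef := by
  rw [← isStrictlyPositive_iff_posDef]
  exact (cfc_isStrictlyPositive_iff f A (continuousOn_spectrum f A) hA.1).2
    fun x hx => hf x (pos_of_mem_spectrum hA hx)

theorem exists_algebraMap_le {A : Matrix m m 𝕜} (hA : A.PosDef) :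
    ∃ l : ℝ, 0 < l ∧ algebraMap ℝ (Matrix m m 𝕜) l ≤ A := by
  suffices ∃ l : ℝ, 0 < l ∧ ∀ x ∈ spectrum ℝ A, l ≤ x by
    obtain ⟨l, hl, hle⟩ := this
    exact ⟨l, hl, algebraMap_le_of_le_spectrum hle hA.1⟩
  rcases (spectrum ℝ A).eq_empty_or_nonempty with hempty | hne
  · exact ⟨1, one_pos, by simp [hempty]⟩
  · obtain ⟨l, hl, hmin⟩ := Set.exists_min_image _ id A.finite_real_spectrum hne
    exact ⟨l, pos_of_mem_spectrum hA hl, hmin⟩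

theorem exists_le_algebraMap {A : Matrix m m 𝕜} (hA : A.IsHermitian) :
    ∃ l : ℝ, 0 < l ∧ A ≤ algebraMap ℝ (Matrix m m 𝕜) l := by
  obtain ⟨b, hb⟩ := A.finite_real_spectrum.bddAbove
  exact ⟨max b 1, by positivity,
    le_algebraMap_of_spectrum_le (fun x hx => (hb hx).trans (le_max_left b 1)) hA⟩

theorem exists_polynomial_cfc_eq_aeval (f : ℝ → ℝ) {A : Matrix m m 𝕜} {B : Matrix k k 𝕜}
    (hA : A.IsHermitian) (hB : B.IsHermitian) :
    ∃ p : Polynomial ℝ, cfc f A = Polynomial.aeval A p ∧ cfc f B = Polynomial.aeval B p := by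
  let s : Finset ℝ := A.finite_real_spectrum.toFinset ∪ B.finite_real_spectrum.toFinset
  have heval : ∀ x ∈ s, f x = (Lagrange.interpolate s id f).eval x := fun x hx =>
    (Lagrange.eval_interpolate_at_node f (Set.injOn_id _) hx).symm
  refine ⟨Lagrange.interpolate s id f, ?_, ?_⟩
  · rw [← cfc_polynomial _ A hA]
    exact cfc_congr fun x hx => heval x (by simp [s, hx])
  · rw [← cfc_polynomial _ B hB]
    exact cfc_congr fun x hx => heval x (by simp [s, hx])

theorem aeval_mul_eq_mul_aeval {A : Matrix m m 𝕜} {B : Matrix k k 𝕜} {X : Matrix m k 𝕜}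
    (h : A * X = X * B) (p : Polynomial ℝ) :
    Polynomial.aeval A p * X = X * Polynomial.aeval B p := by
  have hpow (n : ℕ) : A ^ n * X = X * B ^ n := by
    induction n with
    | zero => simp
    | succ n ih =>
      rw [pow_succ, Matrix.mul_assoc, h, ← Matrix.mul_assoc, ih, pow_succ, Matrix.mul_assoc]
  induction p using Polynomial.induction_on' with
  | add p q hp hq => simp only [map_add, Matrix.add_mul, Matrix.mul_add, hp, hq]
  | monomial n a =>
    simp only [Polynomial.aeval_monomial, ← Algebra.smul_def, Matrix.smul_mul, Matrix.mul_smul,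
      hpow]

theorem cfc_mul_eq_mul_cfc (f : ℝ → ℝ) {A : Matrix m m 𝕜} {B : Matrix k k 𝕜} {X : Matrix m k 𝕜}
    (hA : A.IsHermitian) (hB : B.IsHermitian) (h : A * X = X * B) :
    cfc f A * X = X * cfc f B := by
  obtain ⟨p, hpA, hpB⟩ := exists_polynomial_cfc_eq_aeval f hA hB
  rw [hpA, hpB, aeval_mul_eq_mul_aeval h]

theorem cfc_submatrix (f : ℝ → ℝ) {A : Matrix m m 𝕜} (hA : A.IsHermitian) (e : k ≃ m) :
    cfc f (A.submatrix e e) = (cfc f A).submatrix e e := by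
  have hleft (B : Matrix m m 𝕜) :
      (1 : Matrix m m 𝕜).submatrix e id * B = B.submatrix e id := by
    simpa using (submatrix_mul (1 : Matrix m m 𝕜) B e id id Function.bijective_id).symm
  have hright (B : Matrix k k 𝕜) :
      B * (1 : Matrix m m 𝕜).submatrix e id = B.submatrix id e.symm := by
    ext i j
    simp [mul_apply, one_apply, ← Equiv.eq_symm_apply]
  have hcfc := cfc_mul_eq_mul_cfc f (hA.submatrix e) hA
    (X := (1 : Matrix m m 𝕜).submatrix e id) (by rw [hleft, hright]; ext; simp)
  rw [hleft, hright] at hcfc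
  simpa using congrArg (fun M => M.submatrix id e) hcfc

theorem cfc_fromBlocks_diagonal (f : ℝ → ℝ) {A : Matrix m m 𝕜} {B : Matrix k k 𝕜}
    (hA : A.IsHermitian) (hB : B.IsHermitian) :
    cfc f (fromBlocks A 0 0 B) = fromBlocks (cfc f A) 0 0 (cfc f B) := by
  have hAB : (fromBlocks A 0 0 B).IsHermitian := hA.fromBlocks conjTranspose_zero hB
  have hcolA := cfc_mul_eq_mul_cfc f hAB hA (X := fromRows 1 0)
    (by simp [fromBlocks_mul_fromRows, fromRows_mul])
  have hcolB := cfc_mul_eq_mul_cfc f hAB hB (X := fromRows 0 1)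
    (by simp [fromBlocks_mul_fromRows, fromRows_mul])
  rw [← fromBlocks_toBlocks (cfc f (fromBlocks A 0 0 B))] at hcolA hcolB ⊢
  simp only [fromBlocks_mul_fromRows, fromRows_mul, fromRows_ext_iff, Matrix.mul_one,
    Matrix.mul_zero, add_zero, zero_add, Matrix.one_mul, Matrix.zero_mul] at hcolA hcolB
  rw [hcolA.1, hcolA.2, hcolB.1, hcolB.2]

theorem tendsto_cfc_matrix {ι : Type*} {l : Filter ι} {F : ι → ℝ → ℝ} {f : ℝ → ℝ}
    {A : Matrix m m 𝕜} (h : ∀ x ∈ spectrum ℝ A, Filter.Tendsto (F · x) l (nhds (f x))) :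
    Filter.Tendsto (fun i => cfc (F i) A) l (nhds (cfc f A)) := by
  refine tendsto_cfc_fun (Metric.tendstoUniformlyOn_iff.2 fun ε hε => ?_)
    (.of_forall fun i => continuousOn_spectrum (F i) A)
  rw [Filter.eventually_all_finite A.finite_real_spectrum]
  intro x hx
  simpa only [dist_comm] using Metric.tendsto_nhds.1 (h x hx) ε hε

theorem tendsto_cfc_smul {f : ℝ → ℝ} (hf : ContinuousOn f (Set.Ioi 0)) {A : Matrix m m 𝕜}
    (hA : A.PosDef) :
    Filter.Tendsto (fun c : ℝ => cfc f (c • A)) (nhds 1) (nhds (cfc f A)) := by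
  refine Filter.Tendsto.congr
    (fun c => cfc_comp_smul c f A ((A.finite_real_spectrum.image _).continuousOn f)
      hA.1.isSelfAdjoint) (tendsto_cfc_matrix fun x hx => ?_)
  have hfx : ContinuousAt f ((1 : ℝ) • x) := by
    simpa using hf.continuousAt (Ioi_mem_nhds (pos_of_mem_spectrum hA hx))
  simpa [Function.comp_def] using hfx.tendsto.comp (Filter.tendsto_id.smul_const x)

theorem cfc_smul_one_sub_add_smul {R : Type*} [Ring R] [StarRing R] [TopologicalSpace R]
    [Algebra ℝ R] [ContinuousFunctionalCalculus ℝ R IsSelfAdjoint] [ContinuousMap.UniqueHom ℝ R]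
    (f : ℝ → ℝ) {p : R} (hp : IsStarProjection p) (x y : ℝ) :
    cfc f (x • (1 - p) + y • p) = f x • (1 - p) + f y • p := by
  have hself : IsSelfAdjoint p := hp.isSelfAdjoint
  have hspec := hp.isIdempotentElem.spectrum_subset ℝ
  have hfin := hp.isIdempotentElem.finite_spectrum ℝ
  have haffine (a b : ℝ) : cfc (fun t : ℝ => a + (b - a) * t) p = a • (1 - p) + b • p := by
    rw [cfc_const_add a _ p, cfc_const_mul_id _ p, Algebra.algebraMap_eq_smul_one]
    module
  rw [← haffine x y, ← haffine (f x) (f y), ← cfc_comp' f _ p ((hfin.image _).continuousOn f)]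
  refine cfc_congr fun t ht => ?_
  rcases hspec ht with rfl | rfl <;> simp

end FunctionalCalculus

section QuadraticForm

open scoped MatrixOrder

variable {𝕜 m k : Type*} [RCLike 𝕜] [Fintype m] [Fintype k]

/-- The real part of `⟨A v, v⟩`, as a linear functional of the matrix `A`. For Hermitian `A` the
number `⟨A v, v⟩` is already real. -/
noncomputable def reQuadForm (v : m → 𝕜) : Matrix m m 𝕜 →ₗ[ℝ] ℝ where
  toFun A := RCLike.re (star v ⬝ᵥ A *ᵥ v)
  map_add' A B := by simp [add_mulVec]
  map_smul' c A := by simp [smul_mulVec, RCLike.smul_re]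

theorem reQuadForm_mono (v : m → 𝕜) {A B : Matrix m m 𝕜} (h : A ≤ B) :
    reQuadForm v A ≤ reQuadForm v B := by
  rw [← sub_nonneg, ← map_sub]
  exact (Matrix.le_iff.1 h).re_dotProduct_nonneg v

theorem reQuadForm_pos {A : Matrix m m 𝕜} (hA : A.PosDef) {v : m → 𝕜} (hv : v ≠ 0) :
    0 < reQuadForm v A :=
  hA.re_dotProduct_pos hv

theorem le_of_forall_reQuadForm_le {A B : Matrix m m 𝕜} (hA : A.IsHermitian)
    (hB : B.IsHermitian) (h : ∀ v, reQuadForm v A ≤ reQuadForm v B) : A ≤ B := by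
  have hBA := hB.sub hA
  refine Matrix.le_iff.2 (.of_dotProduct_mulVec_nonneg hBA fun v => RCLike.nonneg_iff.2 ⟨?_, ?_⟩)
  · have := sub_nonneg.2 (h v)
    rwa [← map_sub] at this
  · exact hBA.im_star_dotProduct_mulVec_self v

theorem reQuadForm_conjTranspose_mul (v : m → 𝕜) (X Y : Matrix k m 𝕜) :
    reQuadForm v (Xᴴ * Y) =
      RCLike.re (inner 𝕜 (WithLp.toLp 2 (X *ᵥ v)) (WithLp.toLp 2 (Y *ᵥ v))) := by
  rw [EuclideanSpace.inner_toLp_toLp, dotProduct_comm, star_mulVec, ← dotProduct_mulVec,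
    mulVec_mulVec]
  rfl

theorem reQuadForm_one [DecidableEq m] (v : m → 𝕜) : reQuadForm v 1 = ∑ i, ‖v i‖ ^ 2 := by
  have h := reQuadForm_conjTranspose_mul v (1 : Matrix m m 𝕜) 1
  rwa [conjTranspose_one, one_mul, one_mulVec, inner_self_eq_norm_sq,
    EuclideanSpace.norm_sq_eq] at h

theorem sq_reQuadForm_conjTranspose_mul_le (v : m → 𝕜) (X Y : Matrix k m 𝕜) :
    reQuadForm v (Xᴴ * Y) ^ 2 ≤ reQuadForm v (Xᴴ * X) * reQuadForm v (Yᴴ * Y) := by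
  simp only [reQuadForm_conjTranspose_mul, inner_self_eq_norm_sq, ← mul_pow]
  exact sq_le_sq' (neg_le_of_abs_le ((RCLike.abs_re_le_norm _).trans (norm_inner_le_norm _ _)))
    (re_inner_le_norm _ _)

end QuadraticForm

section Means

open scoped MatrixOrder

variable {n : ℕ} {P Q : Matrix (Fin n) (Fin n) ℂ}

theorem isHermitian_mpow (P : Matrix (Fin n) (Fin n) ℂ) (r : ℝ) : (mpow P r).IsHermitian :=
  cfc_predicate _ P

theorem posDef_mpow (hP : P.PosDef) (r : ℝ) : (mpow P r).PosDef :=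
  posDef_cfc (fun _ hx => Real.rpow_pos_of_pos hx r) hP

theorem mpow_mul_mpow (hP : P.PosDef) (r s : ℝ) : mpow P r * mpow P s = mpow P (r + s) := by
  simp only [mpow, cfc_matrix_mul]
  exact cfc_congr fun x hx => (Real.rpow_add (pos_of_mem_spectrum hP hx) r s).symm

theorem mpow_zero (hP : P.PosDef) : mpow P 0 = 1 := by
  simpa only [mpow, Real.rpow_zero] using cfc_const_one ℝ P hP.1.isSelfAdjoint

theorem mpow_one (hP : P.PosDef) : mpow P 1 = P := by
  simpa only [mpow, Real.rpow_one] using cfc_id' ℝ P hP.1.isSelfAdjoint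

theorem mpow_mul_mpow_neg (hP : P.PosDef) (r : ℝ) : mpow P r * mpow P (-r) = 1 := by
  rw [mpow_mul_mpow hP, add_neg_cancel, mpow_zero hP]

theorem inv_mpow (hP : P.PosDef) (r : ℝ) : (mpow P r)⁻¹ = mpow P (-r) :=
  inv_eq_right_inv (mpow_mul_mpow_neg hP r)

theorem mpow_neg_mul_mpow (hP : P.PosDef) (r : ℝ) : mpow P (-r) * mpow P r = 1 := by
  rw [mpow_mul_mpow hP, neg_add_cancel, mpow_zero hP]

theorem mpow_half_mul_self (hP : P.PosDef) : mpow P (1 / 2) * mpow P (1 / 2) = P := by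
  rw [mpow_mul_mpow hP, add_halves, mpow_one hP]

/-- The matrix `P^{-1/2} Q P^{-1/2}` whose powers define the weighted geometric means of `P` and
`Q`. -/
noncomputable def relMatrix (P Q : Matrix (Fin n) (Fin n) ℂ) : Matrix (Fin n) (Fin n) ℂ :=
  mpow P (-(1 / 2)) * Q * mpow P (-(1 / 2))

theorem posDef_relMatrix (hP : P.PosDef) (hQ : Q.PosDef) : (relMatrix P Q).PosDef := by
  have h := (Matrix.IsUnit.posDef_star_left_conjugate_iff (posDef_mpow hP (-(1 / 2))).isUnit).2 hQ
  rwa [star_eq_conjTranspose, isHermitian_mpow] at h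

theorem mpow_half_mul_relMatrix_mul (hP : P.PosDef) :
    mpow P (1 / 2) * relMatrix P Q * mpow P (1 / 2) = Q := by
  calc mpow P (1 / 2) * relMatrix P Q * mpow P (1 / 2)
      = mpow P (1 / 2) * mpow P (-(1 / 2)) * Q * (mpow P (-(1 / 2)) * mpow P (1 / 2)) := by
        simp only [relMatrix, mul_assoc]
    _ = Q := by rw [mpow_mul_mpow_neg hP, mpow_neg_mul_mpow hP, one_mul, mul_one]

theorem inv_eq_mpow_neg_half_mul (hP : P.PosDef) (hQ : Q.PosDef) :
    Q⁻¹ = mpow P (-(1 / 2)) * mpow (relMatrix P Q) (-1) * mpow P (-(1 / 2)) := by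
  have hC := posDef_relMatrix hP hQ
  rw [← inv_mpow hP, ← inv_mpow hC, mpow_one hC, ← Matrix.mul_inv_rev, ← Matrix.mul_inv_rev,
    ← mul_assoc, mpow_half_mul_relMatrix_mul hP]

theorem one_sub_add_mul_rpow_neg_one_pos {t x : ℝ} (ht₀ : 0 ≤ t) (ht₁ : t ≤ 1) (hx : 0 < x) :
    0 < (1 - t) + t * x ^ (-1 : ℝ) := by
  rcases ht₀.eq_or_lt with rfl | ht
  · simp
  · have := sub_nonneg.2 ht₁
    positivity

theorem smul_one_add_smul_mpow_mul_cfc {t : ℝ} (ht₀ : 0 ≤ t) (ht₁ : t ≤ 1) (hP : P.PosDef) :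
    ((1 - t) • 1 + t • mpow P (-1)) *
      cfc (fun x : ℝ => ((1 - t) + t * x ^ (-1 : ℝ))⁻¹) P = 1 := by
  have hself := hP.1.isSelfAdjoint
  have haffine : (1 - t) • 1 + t • mpow P (-1) =
      cfc (fun x : ℝ => (1 - t) + t * x ^ (-1 : ℝ)) P := by
    rw [cfc_const_add _ _ P (continuousOn_spectrum _ P) hself,
      cfc_const_mul _ _ P (continuousOn_spectrum _ P), Algebra.algebraMap_eq_smul_one, mpow]
  rw [haffine, cfc_matrix_mul, ← cfc_const_one ℝ P hself]
  exact cfc_congr fun x hx => mul_inv_cancel₀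
    (one_sub_add_mul_rpow_neg_one_pos ht₀ ht₁ (pos_of_mem_spectrum hP hx)).ne'

theorem wharm_eq_mul_cfc_mul {t : ℝ} (ht₀ : 0 ≤ t) (ht₁ : t ≤ 1) (hP : P.PosDef)
    (hQ : Q.PosDef) :
    wharm t P Q = mpow P (1 / 2) *
      cfc (fun x : ℝ => ((1 - t) + t * x ^ (-1 : ℝ))⁻¹) (relMatrix P Q) * mpow P (1 / 2) := by
  have hK := smul_one_add_smul_mpow_mul_cfc ht₀ ht₁ (posDef_relMatrix hP hQ)
  have hTS := mpow_neg_mul_mpow hP (1 / 2)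
  have hPinv : P⁻¹ = mpow P (-(1 / 2)) * mpow P (-(1 / 2)) := by
    rw [← inv_mpow hP, ← Matrix.mul_inv_rev, mpow_half_mul_self hP]
  have hQinv := inv_eq_mpow_neg_half_mul hP hQ
  set S := mpow P (1 / 2)
  set T := mpow P (-(1 / 2))
  set C := relMatrix P Q
  set K := cfc (fun x : ℝ => ((1 - t) + t * x ^ (-1 : ℝ))⁻¹) C
  refine inv_eq_right_inv ?_
  calc ((1 - t) • P⁻¹ + t • Q⁻¹) * (S * K * S)
      = T * ((1 - t) • 1 + t • mpow C (-1)) * (T * S) * K * S := by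
        rw [hPinv, hQinv]
        simp only [add_mul, mul_add, smul_mul_assoc, mul_smul_comm, mul_one, mul_assoc]
    _ = T * (((1 - t) • 1 + t • mpow C (-1)) * K) * S := by
        rw [hTS, mul_one, mul_assoc T]
    _ = 1 := by rw [hK, mul_one, hTS]

theorem inv_one_sub_add_mul_rpow_neg_one_le {t x : ℝ} (ht₀ : 0 ≤ t) (ht₁ : t ≤ 1) (hx : 0 < x) :
    ((1 - t) + t * x ^ (-1 : ℝ))⁻¹ ≤ x ^ t := by
  refine inv_le_of_inv_le₀ (by positivity) ?_
  have h := Real.geom_mean_le_arith_mean2_weighted (sub_nonneg.2 ht₁) ht₀ zero_le_one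
    (inv_nonneg.2 hx.le) (sub_add_cancel 1 t)
  rwa [Real.one_rpow, one_mul, mul_one, Real.inv_rpow hx.le, ← Real.rpow_neg_one x] at h

theorem wharm_le_wgeom {t : ℝ} (ht₀ : 0 ≤ t) (ht₁ : t ≤ 1) (hP : P.PosDef) (hQ : Q.PosDef) :
    wharm t P Q ≤ wgeom t P Q := by
  rw [wharm_eq_mul_cfc_mul ht₀ ht₁ hP hQ]
  have hC := posDef_relMatrix hP hQ
  have hle : cfc (fun x : ℝ => ((1 - t) + t * x ^ (-1 : ℝ))⁻¹) (relMatrix P Q) ≤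
      mpow (relMatrix P Q) t :=
    cfc_mono (fun x hx =>
      inv_one_sub_add_mul_rpow_neg_one_le ht₀ ht₁ (pos_of_mem_spectrum hC hx))
      (continuousOn_spectrum _ _) (continuousOn_spectrum _ _)
  have hconj := star_left_conjugate_le_conjugate hle (mpow P (1 / 2))
  rwa [star_eq_conjTranspose, isHermitian_mpow] at hconj

theorem sq_reQuadForm_wgeom_half_le (hP : P.PosDef) (hQ : Q.PosDef) (v : Fin n → ℂ) :
    reQuadForm v (wgeom 2⁻¹ P Q) ^ 2 ≤ reQuadForm v P * reQuadForm v Q := by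
  set S := mpow P (1 / 2)
  set R := mpow (relMatrix P Q) (1 / 2)
  have hS : Sᴴ = S := isHermitian_mpow P _
  have hR : Rᴴ = R := isHermitian_mpow _ _
  have hgeom : wgeom 2⁻¹ P Q = Sᴴ * (R * S) := by
    rw [hS, ← mul_assoc, wgeom, ← one_div]
    rfl
  have hPeq : P = Sᴴ * S := by rw [hS, mpow_half_mul_self hP]
  have hQeq : Q = (R * S)ᴴ * (R * S) := by
    calc Q = S * relMatrix P Q * S := (mpow_half_mul_relMatrix_mul hP).symm
      _ = S * (R * R) * S := by rw [mpow_half_mul_self (posDef_relMatrix hP hQ)]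
      _ = (R * S)ᴴ * (R * S) := by simp only [conjTranspose_mul, hS, hR, mul_assoc]
  calc reQuadForm v (wgeom 2⁻¹ P Q) ^ 2 = reQuadForm v (Sᴴ * (R * S)) ^ 2 := by rw [hgeom]
    _ ≤ reQuadForm v (Sᴴ * S) * reQuadForm v ((R * S)ᴴ * (R * S)) :=
      sq_reQuadForm_conjTranspose_mul_le v S (R * S)
    _ = reQuadForm v P * reQuadForm v Q := by rw [← hPeq, ← hQeq]

end Means

section Compression

open scoped MatrixOrder

variable {𝕜 m k : Type*} [RCLike 𝕜]

theorem posDef_fromBlocks_diagonal [Finite m] [Finite k] {A : Matrix m m 𝕜} {B : Matrix k k 𝕜}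
    (hA : A.PosDef) (hB : B.PosDef) : (fromBlocks A 0 0 B).PosDef := by
  classical
  cases nonempty_fintype m
  cases nonempty_fintype k
  have : Invertible A := hA.isUnit.invertible
  have hsemi : (fromBlocks A 0 0 B).PosSemidef := by
    simpa using (hA.fromBlocks₁₁ 0 B).2 (by simpa using hB.posSemidef)
  exact hsemi.posDef_iff_isUnit.2 (isUnit_fromBlocks_zero₂₁.2 ⟨hA.isUnit, hB.isUnit⟩)

variable [Fintype m] [DecidableEq k]

theorem posDef_conjTranspose_mul_mul [Finite k] {D : Matrix m m 𝕜} (hD : D.PosDef)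
    {V : Matrix m k 𝕜} (hV : Vᴴ * V = 1) : (Vᴴ * D * V).PosDef := by
  cases nonempty_fintype k
  exact hD.conjTranspose_mul_mul_same (Function.LeftInverse.injective (g := (Vᴴ *ᵥ ·)) fun x => by
    simp [hV])

variable [DecidableEq m] [Fintype k]

theorem isStarProjection_one_sub_mul_conjTranspose {V : Matrix m k 𝕜} (hV : Vᴴ * V = 1) :
    IsStarProjection (1 - V * Vᴴ) := by
  refine IsStarProjection.one_sub ⟨?_, isHermitian_mul_conjTranspose_self V⟩
  rw [IsIdempotentElem, Matrix.mul_assoc, ← Matrix.mul_assoc Vᴴ, hV, Matrix.one_mul]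

theorem le_smul_pinching {D P : Matrix m m 𝕜} (hD : D.PosSemidef) (hP : P.IsHermitian) {η : ℝ}
    (hη : 0 < η) :
    D ≤ (1 + η) • (P * D * P) + (1 + η⁻¹) • ((1 - P) * D * (1 - P)) := by
  have hherm : (η • P - (1 - P)).IsHermitian :=
    (hP.smul (IsSelfAdjoint.all η)).sub (isHermitian_one.sub hP)
  have hsemi := (hD.conjTranspose_mul_mul_same (η • P - (1 - P))).smul (inv_nonneg.2 hη.le)
  rw [hherm] at hsemi
  have hηη : η⁻¹ * η = 1 := inv_mul_cancel₀ hη.ne'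
  rw [Matrix.le_iff]
  convert hsemi using 1
  simp only [sub_mul, mul_sub, smul_mul_assoc, mul_smul_comm, one_mul, mul_one, smul_sub,
    smul_smul, ← mul_assoc, hηη, one_smul, add_smul]
  module

theorem exists_le_dilation {D : Matrix m m 𝕜} (hD : D.PosSemidef)
    {V : Matrix m k 𝕜} (hV : Vᴴ * V = 1) {c : ℝ} (hc : 1 < c) :
    ∃ l : ℝ, 0 < l ∧ D ≤ V * (c • (Vᴴ * D * V)) * Vᴴ + l • (1 - V * Vᴴ) := by
  obtain ⟨b, hb, hDb⟩ := exists_le_algebraMap hD.1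
  have hη : 0 < c - 1 := sub_pos.2 hc
  have hQ := isStarProjection_one_sub_mul_conjTranspose hV
  set Q := 1 - V * Vᴴ
  have hQDQ : Q * D * Q ≤ b • Q := by
    simpa [Algebra.algebraMap_eq_smul_one, hQ.isSelfAdjoint.star_eq, hQ.isIdempotentElem.eq]
      using star_left_conjugate_le_conjugate hDb Q
  refine ⟨(1 + (c - 1)⁻¹) * b, by positivity, ?_⟩
  calc D ≤ (1 + (c - 1)) • (V * Vᴴ * D * (V * Vᴴ)) + (1 + (c - 1)⁻¹) • (Q * D * Q) :=
        le_smul_pinching hD (isHermitian_mul_conjTranspose_self V) hη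
    _ ≤ (1 + (c - 1)) • (V * Vᴴ * D * (V * Vᴴ)) + (1 + (c - 1)⁻¹) • (b • Q) := by gcongr
    _ = V * (c • (Vᴴ * D * V)) * Vᴴ + ((1 + (c - 1)⁻¹) * b) • Q := by
        rw [add_sub_cancel, smul_smul]
        simp only [Matrix.mul_smul, Matrix.smul_mul, Matrix.mul_assoc]

theorem cfc_dilation (f : ℝ → ℝ) {M : Matrix k k 𝕜} (hM : M.IsHermitian)
    {V : Matrix m k 𝕜} (hV : Vᴴ * V = 1) (l : ℝ) :
    cfc f (V * M * Vᴴ + l • (1 - V * Vᴴ)) = V * cfc f M * Vᴴ + f l • (1 - V * Vᴴ) := by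
  set N := V * M * Vᴴ + l • (1 - V * Vᴴ) with hN
  have hNherm : N.IsHermitian := (isHermitian_mul_mul_conjTranspose V hM).add
    ((isHermitian_one.sub (isHermitian_mul_conjTranspose_self V)).smul (IsSelfAdjoint.all l))
  have hVV (X : Matrix k m 𝕜) : Vᴴ * (V * X) = X := by
    rw [← Matrix.mul_assoc, hV, Matrix.one_mul]
  have hrange : cfc f N * V = V * cfc f M := by
    refine cfc_mul_eq_mul_cfc f hNherm hM ?_
    simp [hN, Matrix.add_mul, Matrix.sub_mul, Matrix.mul_assoc, hV]
  have hcompl : cfc f N * (1 - V * Vᴴ) = f l • (1 - V * Vᴴ) := by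
    have h := cfc_mul_eq_mul_cfc f hNherm (B := algebraMap ℝ (Matrix m m 𝕜) l)
      (X := 1 - V * Vᴴ) (IsSelfAdjoint.algebraMap _ (.all l)) ?_
    · rwa [cfc_algebraMap, ← Algebra.commutes, ← Algebra.smul_def] at h
    · rw [← Algebra.commutes, ← Algebra.smul_def, hN]
      simp [Matrix.add_mul, Matrix.sub_mul, Matrix.mul_sub, Matrix.mul_assoc, hVV]
  calc cfc f N = cfc f N * V * Vᴴ + cfc f N * (1 - V * Vᴴ) := by
        rw [mul_sub, mul_one, Matrix.mul_assoc, add_sub_cancel]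
    _ = V * cfc f M * Vᴴ + f l • (1 - V * Vᴴ) := by rw [hrange, hcompl]

theorem inv_fromBlocks_diagonal {A : Matrix m m 𝕜} {B : Matrix k k 𝕜} (hA : IsUnit A)
    (hB : IsUnit B) : (fromBlocks A 0 0 B)⁻¹ = fromBlocks A⁻¹ 0 0 B⁻¹ := by
  simp [inv_fromBlocks_zero₂₁_of_isUnit_iff A 0 B (iff_of_true hA hB)]

theorem le_inv_conjTranspose_mul_inv_mul {X : Matrix k k 𝕜} {G : Matrix m m 𝕜}
    (hG : G.PosDef) {V : Matrix m k 𝕜} (hV : Vᴴ * V = 1) (h : V * X * Vᴴ ≤ G) :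
    X ≤ (Vᴴ * G⁻¹ * V)⁻¹ := by
  have hW := posDef_conjTranspose_mul_mul hG.inv hV
  set W := Vᴴ * G⁻¹ * V with hWdef
  have hWu := (isUnit_iff_isUnit_det W).1 hW.isUnit
  have hGu := (isUnit_iff_isUnit_det G).1 hG.isUnit
  have hconj := (Matrix.le_iff.1 h).conjTranspose_mul_mul_same (G⁻¹ * V * W⁻¹)
  have hleft : (G⁻¹ * V * W⁻¹)ᴴ = W⁻¹ * Vᴴ * G⁻¹ := by
    simp only [conjTranspose_mul, hG.inv.1.eq, hW.inv.1.eq, Matrix.mul_assoc]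
  rw [Matrix.le_iff]
  convert hconj using 1
  rw [hleft, Matrix.mul_sub, Matrix.sub_mul]
  congr 1
  · calc W⁻¹ = W⁻¹ * W * W⁻¹ := by rw [nonsing_inv_mul _ hWu, one_mul]
      _ = W⁻¹ * Vᴴ * (G⁻¹ * G) * G⁻¹ * V * W⁻¹ := by
        rw [nonsing_inv_mul _ hGu]
        simp only [hWdef, Matrix.mul_assoc, Matrix.one_mul]
      _ = W⁻¹ * Vᴴ * G⁻¹ * G * (G⁻¹ * V * W⁻¹) := by simp only [Matrix.mul_assoc]
  · calc X = W⁻¹ * W * X * (W * W⁻¹) := by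
          rw [nonsing_inv_mul _ hWu, mul_nonsing_inv _ hWu, one_mul, mul_one]
      _ = W⁻¹ * Vᴴ * G⁻¹ * (V * X * Vᴴ) * (G⁻¹ * V * W⁻¹) := by
        simp only [hWdef, Matrix.mul_assoc]

end Compression

section Forward

open scoped MatrixOrder

variable {m k : Type*} [Fintype m] [DecidableEq m] [Fintype k] [DecidableEq k] {f : ℝ → ℝ}

theorem OperatorAntitone.cfc_le (hf : OperatorAntitone f) {A B : Matrix m m ℂ} (hA : A.PosDef)
    (hAB : A ≤ B) : cfc f B ≤ cfc f A := by
  have hB : B.PosDef := by simpa using hA.add_posSemidef (Matrix.le_iff.1 hAB)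
  let e := (Fintype.equivFin m).symm
  have h := hf _ (A.submatrix e e) (B.submatrix e e) (hA.submatrix e.injective)
    (hB.submatrix e.injective) ((Matrix.le_iff.1 hAB).submatrix e)
  rw [cfc_submatrix f hA.1, cfc_submatrix f hB.1] at h
  exact Matrix.le_iff.2 ((posSemidef_submatrix_equiv e).1 h)

theorem OperatorAntitone.mul_cfc_smul_mul_le (hf : OperatorAntitone f)
    (hpos : ∀ x, 0 < x → 0 ≤ f x) {D : Matrix m m ℂ} (hD : D.PosDef) {V : Matrix m k ℂ}
    (hV : Vᴴ * V = 1) {c : ℝ} (hc : 1 < c) :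
    V * cfc f (c • (Vᴴ * D * V)) * Vᴴ ≤ cfc f D := by
  obtain ⟨l, hl, hDl⟩ := exists_le_dilation hD.posSemidef hV hc
  have hM : (c • (Vᴴ * D * V)).IsHermitian :=
    (isHermitian_conjTranspose_mul_mul V hD.1).smul (IsSelfAdjoint.all c)
  calc V * cfc f (c • (Vᴴ * D * V)) * Vᴴ
      ≤ V * cfc f (c • (Vᴴ * D * V)) * Vᴴ + f l • (1 - V * Vᴴ) :=
        le_add_of_nonneg_right (smul_nonneg (hpos l hl)
          (isStarProjection_one_sub_mul_conjTranspose hV).nonneg)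
    _ = cfc f (V * (c • (Vᴴ * D * V)) * Vᴴ + l • (1 - V * Vᴴ)) := (cfc_dilation f hM hV l).symm
    _ ≤ cfc f D := hf.cfc_le hD hDl

theorem OperatorAntitone.mul_cfc_mul_le (hf : OperatorAntitone f)
    (hcont : ContinuousOn f (Set.Ioi 0)) (hpos : ∀ x, 0 < x → 0 ≤ f x) {D : Matrix m m ℂ}
    (hD : D.PosDef) {V : Matrix m k ℂ} (hV : Vᴴ * V = 1) :
    V * cfc f (Vᴴ * D * V) * Vᴴ ≤ cfc f D := by
  have hlim := (tendsto_cfc_smul hcont (posDef_conjTranspose_mul_mul hD hV)).mono_left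
    (nhdsWithin_le_nhds (s := Set.Ioi 1))
  have hmul : Continuous fun X : Matrix k k ℂ => V * X * Vᴴ :=
    (continuous_const.matrix_mul continuous_id).matrix_mul continuous_const
  open scoped Matrix.Norms.L2Operator in
  exact le_of_tendsto ((hmul.tendsto _).comp hlim)
    (Filter.eventually_of_mem self_mem_nhdsWithin fun c hc =>
      hf.mul_cfc_smul_mul_le hpos hD hV hc)

theorem OperatorAntitone.cfc_conjTranspose_mul_mul_le (hf : OperatorAntitone f)
    (hcont : ContinuousOn f (Set.Ioi 0)) (hpos : ∀ x, 0 < x → 0 < f x) {D : Matrix m m ℂ}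
    (hD : D.PosDef) {V : Matrix m k ℂ} (hV : Vᴴ * V = 1) :
    cfc f (Vᴴ * D * V) ≤ (Vᴴ * (cfc f D)⁻¹ * V)⁻¹ :=
  le_inv_conjTranspose_mul_inv_mul (posDef_cfc hpos hD) hV
    (hf.mul_cfc_mul_le hcont (fun x hx => (hpos x hx).le) hD hV)

theorem OperatorAntitone.cfc_warith_le_wharm (hf : OperatorAntitone f)
    (hcont : ContinuousOn f (Set.Ioi 0)) (hpos : ∀ x, 0 < x → 0 < f x) {n : ℕ}
    {A B : Matrix (Fin n) (Fin n) ℂ} (hA : A.PosDef) (hB : B.PosDef) {t : ℝ} (ht₀ : 0 ≤ t)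
    (ht₁ : t ≤ 1) : cfc f (warith t A B) ≤ wharm t (cfc f A) (cfc f B) := by
  let V : Matrix (Fin n ⊕ Fin n) (Fin n) ℂ := fromRows (√(1 - t) • 1) (√t • 1)
  have hcompress (X Y : Matrix (Fin n) (Fin n) ℂ) :
      Vᴴ * fromBlocks X 0 0 Y * V = (1 - t) • X + t • Y := by
    have hs := Real.mul_self_sqrt ht₀
    have hs' := Real.mul_self_sqrt (sub_nonneg.2 ht₁)
    simp [V, conjTranspose_fromRows_eq_fromCols_conjTranspose, fromCols_mul_fromBlocks,
      fromCols_mul_fromRows, smul_smul, hs, hs', -Real.mul_self_sqrt]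
  have hV : Vᴴ * V = 1 := by
    have h := hcompress 1 1
    rwa [fromBlocks_one, Matrix.mul_one, ← add_smul, sub_add_cancel, one_smul] at h
  have h := hf.cfc_conjTranspose_mul_mul_le hcont hpos (posDef_fromBlocks_diagonal hA hB) hV
  rwa [cfc_fromBlocks_diagonal f hA.1 hB.1, inv_fromBlocks_diagonal (posDef_cfc hpos hA).isUnit
    (posDef_cfc hpos hB).isUnit, hcompress, hcompress] at h

end Forward

section ScalarEstimates

theorem mul_pow_div_le_of_sq_le_mul {h : ℕ → ℝ} (hpos : ∀ n, 0 < h n)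
    (hlog : ∀ n, h (n + 1) ^ 2 ≤ h n * h (n + 2)) (n : ℕ) : h 0 * (h 1 / h 0) ^ n ≤ h n := by
  have hratio (n : ℕ) : h 1 / h 0 ≤ h (n + 1) / h n := by
    refine monotone_nat_of_le_succ (f := fun n => h (n + 1) / h n) (fun n => ?_) n.zero_le
    rw [div_le_div_iff₀ (hpos n) (hpos (n + 1)), ← sq, mul_comm]
    exact hlog n
  induction n with
  | zero => simp
  | succ n ih =>
    have := hpos 0
    have := hpos 1
    calc h 0 * (h 1 / h 0) ^ (n + 1) = h 1 / h 0 * (h 0 * (h 1 / h 0) ^ n) := by ring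
      _ ≤ h 1 / h 0 * h n := by gcongr
      _ ≤ h (n + 1) := (le_div_iff₀ (hpos n)).1 (hratio n)

theorem le_of_sq_le_mul_of_le_linear {h : ℕ → ℝ} (hpos : ∀ n, 0 < h n)
    (hlog : ∀ n, h (n + 1) ^ 2 ≤ h n * h (n + 2)) {a b : ℝ} (hlin : ∀ n : ℕ, h n ≤ a + b * n) :
    h 1 ≤ h 0 := by
  by_contra! hlt
  have hr : 1 < h 1 / h 0 := (one_lt_div (hpos 0)).2 hlt
  have hlim : Filter.Tendsto (fun n : ℕ => (a + b * n) / (h 1 / h 0) ^ n) Filter.atTop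
      (nhds 0) := by
    have hconst := (tendsto_pow_const_div_const_pow_of_one_lt 0 hr).const_mul a
    have hid := (tendsto_pow_const_div_const_pow_of_one_lt 1 hr).const_mul b
    simpa [add_mul, mul_assoc, div_eq_mul_inv] using hconst.add hid
  refine (hpos 0).not_ge (ge_of_tendsto' hlim fun n => ?_)
  rw [le_div_iff₀ (pow_pos (one_pos.trans hr) n)]
  exact (mul_pow_div_le_of_sq_le_mul hpos hlog n).trans (hlin n)

-- Otherwise the inequality, applied with `δ = 2⁻ᵏ⁻¹`, propagates `17 * 2 ^ k < F (y + 1 - 2⁻ᵏ)`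
-- from `k` to `k + 1`.
theorem le_of_sq_mul_le_of_bddAbove {F : ℝ → ℝ} {y : ℝ}
    (hF : ∀ t δ, y ≤ t → 0 < δ → t + δ ≤ y + 1 → (δ * F t) ^ 2 ≤ 1 + 4 * (δ * F (t + δ)))
    (hbdd : BddAbove (F '' Set.Icc y (y + 1))) : F y ≤ 17 := by
  by_contra! hy
  have hblow (k : ℕ) : 17 * 2 ^ k < F (y + 1 - (2 ^ k)⁻¹) := by
    induction k with
    | zero => simpa using hy
    | succ k ih =>
      have hδ : (0 : ℝ) < (2 ^ (k + 1))⁻¹ := by positivity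
      have hδ_half : (2 ^ k)⁻¹ = 2 * (2 ^ (k + 1) : ℝ)⁻¹ := by rw [pow_succ]; field_simp
      have hle : (2 ^ k : ℝ)⁻¹ ≤ 1 := inv_le_one_of_one_le₀ (one_le_pow₀ one_le_two)
      have hstep := hF (y + 1 - (2 ^ k)⁻¹) (2 ^ (k + 1))⁻¹ (by linarith) hδ (by linarith)
      rw [show y + 1 - (2 ^ k)⁻¹ + (2 ^ (k + 1) : ℝ)⁻¹ = y + 1 - (2 ^ (k + 1))⁻¹ by
        linarith] at hstep
      have hlarge : 17 / 2 < (2 ^ (k + 1))⁻¹ * F (y + 1 - (2 ^ k)⁻¹) := by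
        calc (17 / 2 : ℝ) = (2 ^ (k + 1))⁻¹ * (17 * 2 ^ k) := by rw [pow_succ]; field_simp
          _ < _ := by gcongr
      have hnext : 17 < (2 ^ (k + 1))⁻¹ * F (y + 1 - (2 ^ (k + 1))⁻¹) := by nlinarith
      rwa [inv_mul_eq_div, lt_div_iff₀ (by positivity)] at hnext
  obtain ⟨M, hM⟩ := hbdd
  obtain ⟨k, hk⟩ := pow_unbounded_of_one_lt M (one_lt_two (α := ℝ))
  have hle : (2 ^ k : ℝ)⁻¹ ≤ 1 := inv_le_one_of_one_le₀ (one_le_pow₀ one_le_two)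
  have hFM := hM (Set.mem_image_of_mem F
    (Set.mem_Icc.2 ⟨by linarith, by linarith [inv_pos.2 (pow_pos (two_pos (α := ℝ)) k)]⟩ :
      y + 1 - (2 ^ k)⁻¹ ∈ Set.Icc y (y + 1)))
  linarith [hblow k, pow_pos (two_pos (α := ℝ)) k]

end ScalarEstimates

section LineProjection

open scoped MatrixOrder

theorem posDef_smul_one_sub_add_smul {𝕜 m : Type*} [RCLike 𝕜] [Fintype m] [DecidableEq m]
    {p : Matrix m m 𝕜} (hp : IsStarProjection p) {x y : ℝ} (hx : 0 < x) (hy : 0 < y) :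
    (x • (1 - p) + y • p).PosDef := by
  have hexp := cfc_smul_one_sub_add_smul Real.exp hp (Real.log x) (Real.log y)
  rw [Real.exp_log hx, Real.exp_log hy] at hexp
  have hself : IsSelfAdjoint (Real.log x • (1 - p) + Real.log y • p) :=
    (IsSelfAdjoint.smul (.all _) hp.one_sub.isSelfAdjoint).add (.smul (.all _) hp.isSelfAdjoint)
  rw [← isStrictlyPositive_iff_posDef, ← hexp]
  exact (cfc_isStrictlyPositive_iff _ _ (continuousOn_spectrum _ _) hself).2
    fun t _ => Real.exp_pos t

/-- The matrix of `v ↦ ⟨v, w⟩ w` on `ℂ²` for the real vector `w = (a, b)`; when `a ^ 2 + b ^ 2 = 1`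
it is the orthogonal projection onto the line spanned by `w`. -/
noncomputable def lineProj (a b : ℝ) : Matrix (Fin 2) (Fin 2) ℂ :=
  vecMulVec ![(a : ℂ), b] ![(a : ℂ), b]

theorem isStarProjection_lineProj {a b : ℝ} (h : a ^ 2 + b ^ 2 = 1) :
    IsStarProjection (lineProj a b) := by
  have hunit : ![(a : ℂ), b] ⬝ᵥ ![(a : ℂ), b] = 1 := by
    simpa [← sq] using (mod_cast h : (a : ℂ) ^ 2 + b ^ 2 = 1)
  have hreal : star ![(a : ℂ), b] = ![(a : ℂ), b] := by
    ext i
    fin_cases i <;> simp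
  refine ⟨?_, ?_⟩
  · rw [IsIdempotentElem, lineProj, vecMulVec_mul_vecMulVec, hunit, one_smul]
  · rw [IsSelfAdjoint, star_eq_conjTranspose, lineProj, conjTranspose_vecMulVec, hreal]

theorem reQuadForm_lineProj (a b c s : ℝ) :
    reQuadForm ![(c : ℂ), s] (lineProj a b) = (a * c + b * s) ^ 2 := by
  have : star ![(c : ℂ), s] ⬝ᵥ lineProj a b *ᵥ ![(c : ℂ), s] = ((a * c + b * s) ^ 2 : ℝ) := by
    simp only [lineProj, vecMulVec_mulVec, dotProduct_smul, vec2_dotProduct, Pi.star_apply,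
      cons_val_zero, cons_val_one, cons_val_fin_one, RCLike.star_def, Complex.conj_ofReal,
      MulOpposite.smul_eq_mul_unop, MulOpposite.unop_op]
    push_cast
    ring
  exact congrArg Complex.re this

theorem reQuadForm_smul_one_sub_lineProj_add {c s : ℝ} (h : c ^ 2 + s ^ 2 = 1) (a b x y : ℝ) :
    reQuadForm ![(c : ℂ), s] (x • (1 - lineProj a b) + y • lineProj a b) =
      (1 - (a * c + b * s) ^ 2) * x + (a * c + b * s) ^ 2 * y := by
  have hone : reQuadForm ![(c : ℂ), s] 1 = 1 := by simp [reQuadForm_one, h]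
  simp only [map_add, map_smul, map_sub, hone, reQuadForm_lineProj, smul_eq_mul]
  ring

theorem midpoint_smul_one_sub_lineProj_add {c s : ℝ} (h : c ^ 2 + s ^ 2 = 1) (x y : ℝ) :
    (2⁻¹ : ℝ) • ((x • (1 - lineProj s (-c)) + y • lineProj s (-c)) +
      (x • (1 - lineProj s c) + y • lineProj s c)) =
    (c ^ 2 * x + s ^ 2 * y) • (1 - lineProj 0 1) + (s ^ 2 * x + c ^ 2 * y) • lineProj 0 1 := by
  have hsum : lineProj s (-c) + lineProj s c =
      (2 * s ^ 2) • (1 - lineProj 0 1) + (2 * c ^ 2) • lineProj 0 1 := by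
    ext i j
    fin_cases i <;> fin_cases j <;> simp [lineProj, ← sq, two_mul]
  rw [← eq_sub_iff_add_eq'] at h
  rw [h] at hsum ⊢
  calc (2⁻¹ : ℝ) • ((x • (1 - lineProj s (-c)) + y • lineProj s (-c)) +
        (x • (1 - lineProj s c) + y • lineProj s c))
      = x • 1 + ((y - x) / 2) • (lineProj s (-c) + lineProj s c) := by module
    _ = (c ^ 2 * x + (1 - c ^ 2) * y) • (1 - lineProj 0 1) +
        ((1 - c ^ 2) * x + c ^ 2 * y) • lineProj 0 1 := by
      rw [hsum]
      module

end LineProjection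

section OperatorLogConvex

open scoped MatrixOrder

/-- Midpoint operator log-convexity `f(A ∇ B) ≤ f(A) # f(B)` for positive definite matrices of
every size. -/
def OperatorLogConvex (f : ℝ → ℝ) : Prop :=
  ∀ (n : ℕ) (A B : Matrix (Fin n) (Fin n) ℂ), A.PosDef → B.PosDef →
    MLE (cfc f ((2⁻¹ : ℝ) • (A + B))) (wgeom 2⁻¹ (cfc f A) (cfc f B))

variable {f : ℝ → ℝ}

theorem OperatorAntitone.operatorLogConvex (hf : OperatorAntitone f)
    (hcont : ContinuousOn f (Set.Ioi 0)) (hpos : ∀ x, 0 < x → 0 < f x) :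
    OperatorLogConvex f := by
  intro n A B hA hB
  have hmean : (2⁻¹ : ℝ) • (A + B) = warith 2⁻¹ A B := by
    rw [warith]
    module
  have hharm := hf.cfc_warith_le_wharm hcont hpos hA hB (t := 2⁻¹) (by norm_num) (by norm_num)
  rw [hmean]
  exact hharm.trans (wharm_le_wgeom (by norm_num) (by norm_num) (posDef_cfc hpos hA)
    (posDef_cfc hpos hB))

namespace OperatorLogConvex

theorem sq_reQuadForm_cfc_midpoint_le (hf : OperatorLogConvex f) (hpos : ∀ x, 0 < x → 0 < f x)
    {n : ℕ} {A B : Matrix (Fin n) (Fin n) ℂ} (hA : A.PosDef) (hB : B.PosDef) (v : Fin n → ℂ) :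
    reQuadForm v (cfc f ((2⁻¹ : ℝ) • (A + B))) ^ 2 ≤
      reQuadForm v (cfc f A) * reQuadForm v (cfc f B) := by
  have hmid : (0 : Matrix (Fin n) (Fin n) ℂ) ≤ cfc f ((2⁻¹ : ℝ) • (A + B)) :=
    (posDef_cfc hpos ((hA.add hB).smul (by norm_num))).posSemidef.nonneg
  calc reQuadForm v (cfc f ((2⁻¹ : ℝ) • (A + B))) ^ 2
      ≤ reQuadForm v (wgeom 2⁻¹ (cfc f A) (cfc f B)) ^ 2 := by
        gcongr
        · simpa using reQuadForm_mono v hmid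
        · exact reQuadForm_mono v (hf n A B hA hB)
    _ ≤ reQuadForm v (cfc f A) * reQuadForm v (cfc f B) :=
      sq_reQuadForm_wgeom_half_le (posDef_cfc hpos hA) (posDef_cfc hpos hB) v

-- The midpoint inequality for the matrices with eigenvalues `x, y` whose `y`-eigenspaces are the
-- lines through `(s, -c)` and `(s, c)`, tested on the `x`-eigenvector `(c, s)` of the first.
theorem sq_add_le_mul (hf : OperatorLogConvex f) (hpos : ∀ x, 0 < x → 0 < f x) {x y c s : ℝ}
    (hx : 0 < x) (hy : 0 < y) (hcs : c ^ 2 + s ^ 2 = 1) :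
    (c ^ 2 * f (c ^ 2 * x + s ^ 2 * y) + s ^ 2 * f (s ^ 2 * x + c ^ 2 * y)) ^ 2 ≤
      f x * ((1 - 4 * c ^ 2 * s ^ 2) * f x + 4 * c ^ 2 * s ^ 2 * f y) := by
  have hp := isStarProjection_lineProj (a := s) (b := -c) (by linarith)
  have hq := isStarProjection_lineProj (a := s) (b := c) (by linarith)
  have he := isStarProjection_lineProj (a := 0) (b := 1) (by norm_num)
  have h := hf.sq_reQuadForm_cfc_midpoint_le hpos (posDef_smul_one_sub_add_smul hp hx hy)
    (posDef_smul_one_sub_add_smul hq hx hy) ![(c : ℂ), s]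
  rw [midpoint_smul_one_sub_lineProj_add hcs] at h
  simp only [cfc_smul_one_sub_add_smul f hp, cfc_smul_one_sub_add_smul f hq,
    cfc_smul_one_sub_add_smul f he, reQuadForm_smul_one_sub_lineProj_add hcs] at h
  convert h using 1
  · rw [← eq_sub_iff_add_eq] at hcs
    rw [hcs]
    ring
  · ring

theorem sq_mul_convexCombination_le (hf : OperatorLogConvex f) (hpos : ∀ x, 0 < x → 0 < f x)
    {x y σ : ℝ} (hx : 0 < x) (hy : 0 < y) (hσ₀ : 0 < σ) (hσ₁ : σ ≤ 1) :
    (σ * f (σ * x + (1 - σ) * y)) ^ 2 ≤ f x * (f x + 4 * σ * f y) := by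
  have hσ' : 0 ≤ 1 - σ := sub_nonneg.2 hσ₁
  have hfx := hpos x hx
  have hfy := hpos y hy
  have hfl := hpos (σ * x + (1 - σ) * y) (by positivity)
  have hfr := hpos ((1 - σ) * x + σ * y) (by positivity)
  have h := hf.sq_add_le_mul hpos hx hy (c := √σ) (s := √(1 - σ))
    (by rw [Real.sq_sqrt hσ₀.le, Real.sq_sqrt hσ', add_sub_cancel])
  rw [Real.sq_sqrt hσ₀.le, Real.sq_sqrt hσ'] at h
  calc (σ * f (σ * x + (1 - σ) * y)) ^ 2
      ≤ (σ * f (σ * x + (1 - σ) * y) + (1 - σ) * f ((1 - σ) * x + σ * y)) ^ 2 := by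
        gcongr
        exact le_add_of_nonneg_right (by positivity)
    _ ≤ f x * ((1 - 4 * σ * (1 - σ)) * f x + 4 * σ * (1 - σ) * f y) := h
    _ ≤ f x * (1 * f x + 4 * σ * 1 * f y) := by
        gcongr
        · exact sub_le_self _ (by positivity)
        · exact sub_le_self _ hσ₀.le
    _ = f x * (f x + 4 * σ * f y) := by rw [one_mul, mul_one]

theorem sq_mul_le_mul_add (hf : OperatorLogConvex f) (hpos : ∀ x, 0 < x → 0 < f x) {a q δ L : ℝ}
    (ha : 0 < a) (haq : a ≤ q) (hδ : 0 < δ) (hL : q + δ - a ≤ L) :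
    (δ * f q) ^ 2 ≤ f a * (L ^ 2 * f a + 4 * L * δ * f (q + δ)) := by
  set d := q + δ - a with hd
  have hd₀ : 0 < d := by linarith
  have hfa := hpos a ha
  have hfqδ := hpos (q + δ) (by linarith)
  have hq : δ / d * a + (1 - δ / d) * (q + δ) = q := by
    field_simp
    rw [hd]
    ring
  have h := hf.sq_mul_convexCombination_le hpos ha (show 0 < q + δ by linarith)
    (σ := δ / d) (by positivity) (div_le_one_of_le₀ (by linarith) hd₀.le)
  rw [hq] at h
  calc (δ * f q) ^ 2 = d ^ 2 * (δ / d * f q) ^ 2 := by field_simp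
    _ ≤ d ^ 2 * (f a * (f a + 4 * (δ / d) * f (q + δ))) := by gcongr
    _ = f a * (d ^ 2 * f a + 4 * d * δ * f (q + δ)) := by field_simp
    _ ≤ f a * (L ^ 2 * f a + 4 * L * δ * f (q + δ)) := by gcongr

theorem le_mul_mul_add_one_sub (hf : OperatorLogConvex f) (hcont : ContinuousOn f (Set.Ioi 0))
    (hpos : ∀ x, 0 < x → 0 < f x) {a q : ℝ} (ha : 0 < a) (haq : a ≤ q) :
    f q ≤ 17 * f a * (q + 1 - a) := by
  have hfa := hpos a ha
  set L := q + 1 - a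
  have hL : 0 < L := by linarith
  have hbdd : BddAbove ((fun t => f t / (f a * L)) '' Set.Icc q (q + 1)) :=
    isCompact_Icc.bddAbove_image ((hcont.mono fun t ht => ha.trans_le (haq.trans ht.1)).div_const _)
  have h := le_of_sq_mul_le_of_bddAbove (fun t δ ht hδ htδ => ?_) hbdd
  · rwa [div_le_iff₀ (by positivity), ← mul_assoc] at h
  · have hstep := hf.sq_mul_le_mul_add hpos (L := L) ha (haq.trans ht) hδ (by linarith)
    calc (δ * (f t / (f a * L))) ^ 2 = (δ * f t) ^ 2 / (f a * L) ^ 2 := by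
          rw [← div_pow, mul_div_assoc]
      _ ≤ f a * (L ^ 2 * f a + 4 * L * δ * f (t + δ)) / (f a * L) ^ 2 := by gcongr
      _ = 1 + 4 * (δ * (f (t + δ) / (f a * L))) := by field_simp

theorem cfc_le_smul_add_algebraMap (hf : OperatorLogConvex f) (hcont : ContinuousOn f (Set.Ioi 0))
    (hpos : ∀ x, 0 < x → 0 < f x) {m : Type*} [Fintype m] [DecidableEq m] {A : Matrix m m ℂ}
    (hA : A.IsHermitian) {l : ℝ} (hl : 0 < l) (hlA : algebraMap ℝ (Matrix m m ℂ) l ≤ A) :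
    cfc f A ≤ (17 * f l) • A + algebraMap ℝ (Matrix m m ℂ) (17 * f l * (1 - l)) := by
  have hself : IsSelfAdjoint A := hA
  have hspec := (algebraMap_le_iff_le_spectrum hself).1 hlA
  rw [← cfc_const_mul_id _ A, ← cfc_add_const _ _ A]
  refine cfc_mono (fun x hx => ?_) (continuousOn_spectrum _ A) (continuousOn_spectrum _ A)
  linarith [hf.le_mul_mul_add_one_sub hcont hpos hl (hspec x hx)]

theorem operatorAntitone (hf : OperatorLogConvex f) (hcont : ContinuousOn f (Set.Ioi 0))
    (hpos : ∀ x, 0 < x → 0 < f x) : OperatorAntitone f := by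
  intro n A B hA _ hAB
  refine Matrix.le_iff.1 (le_of_forall_reQuadForm_le (cfc_predicate f B) (cfc_predicate f A)
    fun v => ?_)
  rcases eq_or_ne v 0 with rfl | hv
  · simp [reQuadForm]
  obtain ⟨l, hl, hlA⟩ := exists_algebraMap_le hA
  let path (k : ℕ) := A + (k : ℝ) • (B - A)
  have hA_le (k : ℕ) : A ≤ path k :=
    le_add_of_nonneg_right (smul_nonneg k.cast_nonneg (sub_nonneg.2 hAB))
  have hpath (k : ℕ) : (path k).PosDef := by
    simpa using hA.add_posSemidef (Matrix.le_iff.1 (hA_le k))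
  have hmid (k : ℕ) : path (k + 1) = (2⁻¹ : ℝ) • (path k + path (k + 2)) := by
    simp only [path]
    push_cast
    module
  have hlin (k : ℕ) := reQuadForm_mono v
    (hf.cfc_le_smul_add_algebraMap hcont hpos (hpath k).1 hl (hlA.trans (hA_le k)))
  have h := le_of_sq_le_mul_of_le_linear (h := fun k => reQuadForm v (cfc f (path k)))
    (fun k => reQuadForm_pos (posDef_cfc hpos (hpath k)) hv)
    (fun k => by
      rw [hmid]
      exact hf.sq_reQuadForm_cfc_midpoint_le hpos (hpath k) (hpath (k + 2)) v)
    (a := reQuadForm v ((17 * f l) • A + algebraMap ℝ _ (17 * f l * (1 - l))))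
    (b := reQuadForm v ((17 * f l) • (B - A)))
    (fun k => (hlin k).trans_eq <| by
      simp only [path, map_add, map_smul, smul_add, smul_eq_mul]
      ring)
  simpa [path] using h

end OperatorLogConvex

end OperatorLogConvex

theorem stmt_8 (f : ℝ → ℝ) (hf : ContinuousOn f (Set.Ioi 0))
    (hf' : ∀ x ∈ Set.Ioi (0:ℝ), f x ∈ Set.Ioi (0:ℝ)) :
    OperatorAntitone f ↔
      ∀ (n : ℕ) (A B : Matrix (Fin n) (Fin n) ℂ), A.PosDef → B.PosDef →
        MLE (cfc f ((2⁻¹ : ℝ) • (A + B))) (wgeom 2⁻¹ (cfc f A) (cfc f B)) :=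
  ⟨fun h => h.operatorLogConvex hf hf', fun h => OperatorLogConvex.operatorAntitone h hf hf'⟩
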